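/- Let f be a non-wandering homeomorphism of the open annulus 𝔸 = 𝕋¹ × ℝ homotopic to the identity with no periodic points, and let C₁ and C₂ be f-invariant circloids. Then either C₁ = C₂ or C₁ ∩ C₂ = ∅. -/

import Mathlib

open Filter Topology

local notation "⟪" x ", " y "⟫" => @inner ℝ _ _ x y

noncomputable section

/-- The open annulus `𝔸 = 𝕋¹ × ℝ`. -/
abbrev Ann := AddCircle (1 : ℝ) × ℝ

/-- `S ⊆ 𝔸` is unbounded from above in the `ℝ`-coordinate. -/
def UnbAbove (S : Set Ann) : Prop := ¬ BddAbove (Prod.snd '' S)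

/-- `S ⊆ 𝔸` is unbounded from below in the `ℝ`-coordinate. -/
def UnbBelow (S : Set Ann) : Prop := ¬ BddBelow (Prod.snd '' S)

/-- `S ⊆ 𝔸` is bounded (equivalently, bounded in the `ℝ`-coordinate). -/
def BoundedA (S : Set Ann) : Prop := BddAbove (Prod.snd '' S) ∧ BddBelow (Prod.snd '' S)

/-- `E ⊆ 𝔸` is essential: no connected component of its complement is unbounded both
above and below. -/
def EssentialA (E : Set Ann) : Prop :=
  ∀ x ∈ Eᶜ, ¬ (UnbAbove (connectedComponentIn Eᶜ x) ∧ UnbBelow (connectedComponentIn Eᶜ x))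

/-- An annular continuum: a compact connected set whose complement has exactly two
connected components, both unbounded. -/
def IsAnnularContinuum (E : Set Ann) : Prop :=
  IsCompact E ∧ IsConnected E ∧
  (∀ x ∈ Eᶜ, ¬ BoundedA (connectedComponentIn Eᶜ x)) ∧
  ∃ x y, x ∈ Eᶜ ∧ y ∈ Eᶜ ∧ connectedComponentIn Eᶜ x ≠ connectedComponentIn Eᶜ y ∧
    ∀ z ∈ Eᶜ, connectedComponentIn Eᶜ z = connectedComponentIn Eᶜ x ∨
      connectedComponentIn Eᶜ z = connectedComponentIn Eᶜ y

/-- A circloid: an annular continuum containing no strictly smaller annular continuum. -/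
def IsCircloidA (C : Set Ann) : Prop :=
  IsAnnularContinuum C ∧ ∀ E ⊆ C, IsAnnularContinuum E → E = C

/-- `ℒ(U)`: the connected component of `𝔸 \ cl(U)` unbounded from below (for a
generating set it is unique; in general we take the union of all components of
`𝔸 \ cl(U)` unbounded from below). -/
def lowerComp (U : Set Ann) : Set Ann :=
  {z | z ∈ (closure U)ᶜ ∧ UnbBelow (connectedComponentIn (closure U)ᶜ z)}

/-- `𝒰(L)`: the connected component of `𝔸 \ cl(L)` unbounded from above. -/
def upperComp (L : Set Ann) : Set Ann :=
  {z | z ∈ (closure L)ᶜ ∧ UnbAbove (connectedComponentIn (closure L)ᶜ z)}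

/-- An upper generating set: bounded from below with essential closure. -/
def UpperGen (U : Set Ann) : Prop := BddBelow (Prod.snd '' U) ∧ EssentialA (closure U)

/-- A lower generating set: bounded from above with essential closure. -/
def LowerGen (L : Set Ann) : Prop := BddAbove (Prod.snd '' L) ∧ EssentialA (closure L)

/-- `𝒞⁻(U) = 𝔸 \ (𝒰ℒ(U) ∪ ℒ𝒰ℒ(U))`. -/
def Cminus (U : Set Ann) : Set Ann :=
  (upperComp (lowerComp U) ∪ lowerComp (upperComp (lowerComp U)))ᶜ

/-- `𝒞⁺(L) = 𝔸 \ (ℒ𝒰(L) ∪ 𝒰ℒ𝒰(L))`. -/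
def Cplus (L : Set Ann) : Set Ann :=
  (lowerComp (upperComp L) ∪ upperComp (lowerComp (upperComp L)))ᶜ

/-- `f` is non-wandering: no nonempty open set `U` satisfies `fⁿ(U) ∩ U = ∅` for all
`n ≥ 1`. -/
def NonWandering {X : Type*} [TopologicalSpace X] (f : X → X) : Prop :=
  ∀ U : Set X, IsOpen U → U.Nonempty → ∃ n : ℕ, 1 ≤ n ∧ (f^[n] '' U ∩ U).Nonempty

/-- `f` has a periodic point. -/
def HasPeriodicPoint {X : Type*} (f : X → X) : Prop :=
  ∃ (x : X) (q : ℕ), 1 ≤ q ∧ f^[q] x = x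

/-- The covering map `p : ℝ² → 𝔸`. -/
def projA (z : ℝ × ℝ) : Ann := ((z.1 : AddCircle (1 : ℝ)), z.2)

/-- `G` is a lift of `f : 𝔸 → 𝔸`:  `p ∘ G = f ∘ p` and `G (z + (1,0)) = G z + (1,0)`.
The existence of such a lift expresses that `f` is homotopic to the identity. -/
def IsLiftA (f : Ann ≃ₜ Ann) (G : (ℝ × ℝ) ≃ₜ (ℝ × ℝ)) : Prop :=
  (∀ z : ℝ × ℝ, projA (G z) = f (projA z)) ∧
  ∀ z : ℝ × ℝ, G (z + (1, 0)) = G z + (1, 0)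

/-- A simple closed curve in `𝔸`: a subset homeomorphic to the circle. -/
def IsSimpleClosedCurveA (Γ : Set Ann) : Prop :=
  ∃ e : AddCircle (1 : ℝ) → Ann, IsEmbedding e ∧ Γ = Set.range e

theorem bl_exp_const {X : Type*} [TopologicalSpace X] [PreconnectedSpace X] {φ : X → ℂ}
    (hc : Continuous φ) (h1 : ∀ x, Complex.exp (φ x) = 1) (x y : X) : φ x = φ y := by
  have := Complex.isCoveringMap_exp.eq_of_comp_eq (g₁ := φ) (g₂ := fun _ => φ y) hc
    continuous_const (by funext z; simp [h1]) y rfl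
  exact congrFun this x

theorem bl_log_lift {X : Type*} [TopologicalSpace X] [LocallyPathConnectedSpace X]
    [SimplyConnectedSpace X] {g : X → ℂ} (hg : Continuous g) (h0 : ∀ x, g x ≠ 0) :
    ∃ φ : X → ℂ, Continuous φ ∧ ∀ x, Complex.exp (φ x) = g x := by
  obtain ⟨x0⟩ : Nonempty X := inferInstance
  obtain ⟨F, ⟨-, hF⟩, -⟩ := Complex.isCoveringMapOn_exp.existsUnique_continuousMap_lifts
    (⟨g, hg⟩ : C(X, ℂ)) (a₀ := x0) (Complex.exp_log (h0 x0)) (fun x => by simpa using h0 x)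
  exact ⟨F, F.continuous, fun x => congrFun hF x⟩

/-- orientation preserving -/
def OPr (h : ℂ ≃ₜ ℂ) : Prop := ∃ A : ℂ × ℂ → ℂ, ContinuousOn A {p | p.1 ≠ p.2} ∧
  ∀ u v, u ≠ v → h u - h v = Complex.exp (A (u, v)) * (u - v)

theorem OPr.trans {h g : ℂ ≃ₜ ℂ} (hh : OPr h) (hg : OPr g) : OPr (h.trans g) := by
  obtain ⟨A, hA, hA'⟩ := hh
  obtain ⟨B, hB, hB'⟩ := hg
  refine ⟨fun p => B (h p.1, h p.2) + A p, ?_, ?_⟩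
  · refine ContinuousOn.add ?_ hA
    refine hB.comp (by fun_prop) ?_
    intro p hp; simpa using hp
  · intro u v huv
    have : h u ≠ h v := by simpa using huv
    simp only [Homeomorph.trans_apply]
    rw [hB' _ _ this, hA' _ _ huv, Complex.exp_add]; ring

theorem OPr.symm {h : ℂ ≃ₜ ℂ} (hh : OPr h) : OPr h.symm := by
  obtain ⟨A, hA, hA'⟩ := hh
  refine ⟨fun p => - A (h.symm p.1, h.symm p.2), ?_, ?_⟩
  · refine ContinuousOn.neg ?_
    refine hA.comp (by fun_prop) ?_
    intro p hp; simpa using hp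
  · intro u v huv
    have : h.symm u ≠ h.symm v := by simpa using huv
    have := hA' _ _ this
    simp only [Homeomorph.apply_symm_apply] at this
    rw [this, Complex.exp_neg]
    field_simp [Complex.exp_ne_zero]

theorem OPr.refl : OPr (Homeomorph.refl ℂ) := ⟨fun _ => 0, by fun_prop, by simp⟩

/-- no points of period two -/
theorem bl_period_two {h : ℂ ≃ₜ ℂ} (hh : OPr h) (hf : ∀ z, h z ≠ z) (x : ℂ) (hx : h (h x) = x) :
    False := by
  obtain ⟨A, hA, hA'⟩ := hh
  obtain ⟨L, hL, hL'⟩ := bl_log_lift (g := fun z => h z - z) (by fun_prop)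
    (fun z => sub_ne_zero.2 (hf z))
  have hsymm : ∀ u v : ℂ, u ≠ v → A (u, v) = A (v, u) := by
    intro u v huv
    let a : ℝ → ℂ := fun t => (u + v) / 2 + Complex.exp (t * Complex.I) * ((u - v) / 2)
    let b : ℝ → ℂ := fun t => (u + v) / 2 - Complex.exp (t * Complex.I) * ((u - v) / 2)
    have hab : ∀ t, a t ≠ b t := by
      intro t ht
      have : Complex.exp (t * Complex.I) * (u - v) = 0 := by
        have : a t - b t = 0 := sub_eq_zero.2 ht
        simp only [a, b] at this
        rw [← this]; ring
      rcases mul_eq_zero.1 this with h1 | h1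
      · exact Complex.exp_ne_zero _ h1
      · exact huv (sub_eq_zero.1 h1)
    have hac : Continuous a := by fun_prop
    have hbc : Continuous b := by fun_prop
    have key := bl_exp_const (X := ℝ) (φ := fun t => A (a t, b t) - A (b t, a t)) (by
        refine Continuous.sub ?_ ?_
        · exact hA.comp_continuous (by fun_prop) (fun t => hab t)
        · exact hA.comp_continuous (by fun_prop) (fun t => (hab t).symm)) (by
        intro t
        have h1 := hA' _ _ (hab t)
        have h2 := hA' _ _ (hab t).symm
        rw [Complex.exp_sub, div_eq_one_iff_eq (Complex.exp_ne_zero _)]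
        have h3 : a t - b t ≠ 0 := sub_ne_zero.2 (hab t)
        apply mul_right_cancel₀ h3
        rw [← h1]
        linear_combination -h2) 0 Real.pi
    have a0 : a 0 = u := by simp only [a]; simp; ring
    have b0 : b 0 = v := by simp only [b]; simp; ring
    have a1 : a Real.pi = v := by simp only [a]; rw [Complex.exp_pi_mul_I]; ring
    have b1 : b Real.pi = u := by simp only [b]; rw [Complex.exp_pi_mul_I]; ring
    simp only [a0, b0, a1, b1] at key
    have : 2 * (A (u, v) - A (v, u)) = 0 := by linear_combination key
    have := (mul_eq_zero.1 this).resolve_left two_ne_zero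
    exact sub_eq_zero.1 this
  have key := bl_exp_const (X := ℂ) (φ := fun z => L (h z) - A (h z, z) - L z) (by
      refine Continuous.sub (Continuous.sub (by fun_prop) ?_) hL
      exact hA.comp_continuous (by fun_prop) (fun t => hf t)) (by
      intro z
      rw [Complex.exp_sub, Complex.exp_sub, hL', hL', hA' _ _ (hf z), div_div,
        div_self]
      exact mul_ne_zero (Complex.exp_ne_zero _) (sub_ne_zero.2 (hf z))) x (h x)
  simp only [hx] at key
  rw [hsymm _ _ (hf x)] at key
  have : L (h x) = L x := by
    have : 2 * (L (h x) - L x) = 0 := by linear_combination key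
    have := (mul_eq_zero.1 this).resolve_left two_ne_zero
    exact sub_eq_zero.1 this
  have h1 := hL' x
  have h2 := hL' (h x)
  rw [this, h1, hx] at h2
  have : h x - x = 0 := by
    have : 2 * (h x - x) = 0 := by linear_combination h2
    exact (mul_eq_zero.1 this).resolve_left two_ne_zero
  exact hf x (sub_eq_zero.1 this)

/-- small push -/
theorem bl_push_ball (c c' : ℂ) (ρ : ℝ) (hc : ‖c' - c‖ < ρ) :
    ∃ φ : ℂ ≃ₜ ℂ, OPr φ ∧ φ c = c' ∧ ∀ z, z ∉ Metric.ball c ρ → φ z = z := by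
  have hρ : 0 < ρ := lt_of_le_of_lt (norm_nonneg _) hc
  let e : ℂ → ℂ := fun z => ((max 0 (1 - ‖z - c‖ / ρ) : ℝ) : ℂ) * (c' - c)
  let k : NNReal := ⟨‖c' - c‖ / ρ, by positivity⟩
  have hk : (k : ℝ) = ‖c' - c‖ / ρ := rfl
  have hk1 : (k : ℝ) < 1 := by rw [hk, div_lt_one hρ]; exact hc
  have hk1' : k < 1 := by exact_mod_cast hk1
  have he : ∀ u v, ‖e u - e v‖ ≤ k * ‖u - v‖ := by
    intro u v
    have : e u - e v = ((max 0 (1 - ‖u - c‖ / ρ) - max 0 (1 - ‖v - c‖ / ρ) : ℝ) : ℂ) * (c' - c) := by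
      simp only [e]; push_cast; ring
    rw [this, norm_mul, Complex.norm_real, hk, Real.norm_eq_abs]
    have h1 : |max 0 (1 - ‖u - c‖ / ρ) - max 0 (1 - ‖v - c‖ / ρ)| ≤ ‖u - v‖ / ρ := by
      rw [max_comm 0, max_comm 0]
      refine (abs_max_sub_max_le_abs _ _ _).trans ?_
      have : (1 - ‖u - c‖ / ρ) - (1 - ‖v - c‖ / ρ) = (‖v - c‖ - ‖u - c‖) / ρ := by ring
      rw [this, abs_div, abs_of_pos hρ]
      gcongr
      refine (abs_norm_sub_norm_le _ _).trans ?_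
      rw [norm_sub_rev u v]; simp
    calc _ ≤ ‖u - v‖ / ρ * ‖c' - c‖ := by gcongr
      _ = _ := by ring
  have hap : ApproximatesLinearOn (fun z => z + e z)
      ((ContinuousLinearEquiv.refl ℝ ℂ : ℂ ≃L[ℝ] ℂ) : ℂ →L[ℝ] ℂ) Set.univ k := by
    intro u _ v _
    have : u + e u - (v + e v) - ((ContinuousLinearEquiv.refl ℝ ℂ : ℂ ≃L[ℝ] ℂ) : ℂ →L[ℝ] ℂ) (u - v)
      = e u - e v := by simp; ring
    rw [this]; exact he u v
  let φ : ℂ ≃ₜ ℂ := hap.toHomeomorph _ (Or.inr (by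
    have : ‖((ContinuousLinearEquiv.refl ℝ ℂ).symm : ℂ →L[ℝ] ℂ)‖₊ = 1 := by
      ext; exact ContinuousLinearMap.norm_id
    rw [this]; simpa using hk1'))
  have hφ : ∀ z, φ z = z + e z := fun z => rfl
  refine ⟨φ, ?_, ?_, ?_⟩
  · have hs : ∀ u v : ℂ, u ≠ v → (φ u - φ v) / (u - v) ∈ Complex.slitPlane := by
      intro u v huv
      have h0 : u - v ≠ 0 := sub_ne_zero.2 huv
      have : (φ u - φ v) / (u - v) = 1 + (e u - e v) / (u - v) := by
        rw [hφ, hφ]; field_simp; ring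
      rw [this]
      apply Complex.mem_slitPlane_of_norm_lt_one
      rw [norm_div]
      have h2 : 0 < ‖u - v‖ := norm_pos_iff.2 h0
      rw [div_lt_one h2]
      calc _ ≤ k * ‖u - v‖ := he u v
        _ < 1 * ‖u - v‖ := by gcongr
        _ = _ := one_mul _
    refine ⟨fun p => Complex.log ((φ p.1 - φ p.2) / (p.1 - p.2)), ?_, ?_⟩
    · refine ContinuousOn.clog ?_ (fun p hp => hs _ _ hp)
      refine ContinuousOn.div (by fun_prop) (by fun_prop) (fun p hp => sub_ne_zero.2 hp)
    · intro u v huv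
      rw [Complex.exp_log (Complex.slitPlane_ne_zero (hs u v huv)),
        div_mul_cancel₀ _ (sub_ne_zero.2 huv)]
  · rw [hφ]; simp [e]
  · intro z hz
    rw [hφ]
    have : ρ ≤ ‖z - c‖ := by simpa [dist_eq_norm] using hz
    have h1 : 1 ≤ ‖z - c‖ / ρ := (one_le_div hρ).2 this
    have : max 0 (1 - ‖z - c‖ / ρ) = 0 := max_eq_left (by linarith)
    simp [e, this]

theorem bl_push {N : Set ℂ} (hN : IsOpen N) (hc : IsPreconnected N) {a b : ℂ} (ha : a ∈ N)
    (hb : b ∈ N) : ∃ φ : ℂ ≃ₜ ℂ, OPr φ ∧ φ a = b ∧ ∀ z, z ∉ N → φ z = z := by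
  let R : ℂ → Prop := fun b => ∃ φ : ℂ ≃ₜ ℂ, OPr φ ∧ φ a = b ∧ ∀ z, z ∉ N → φ z = z
  have step : ∀ b c : ℂ, ∀ ρ, Metric.ball b ρ ⊆ N → c ∈ Metric.ball b ρ → (R b ↔ R c) := by
    intro b c ρ hρ hcb
    obtain ⟨ψ, hψ, hψ1, hψ2⟩ := bl_push_ball b c ρ (by simpa [dist_eq_norm] using hcb)
    have hψ3 : ∀ z, z ∉ N → ψ z = z := fun z hz => hψ2 z (fun h => hz (hρ h))
    constructor
    · rintro ⟨φ, h1, h2, h3⟩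
      refine ⟨φ.trans ψ, h1.trans hψ, by simp [h2, hψ1], fun z hz => by
        simp [h3 z hz, hψ3 z hz]⟩
    · rintro ⟨φ, h1, h2, h3⟩
      refine ⟨φ.trans ψ.symm, h1.trans hψ.symm, by simp [h2, ← hψ1], fun z hz => by
        simp only [Homeomorph.trans_apply, h3 z hz]
        rw [Homeomorph.symm_apply_eq, hψ3 z hz]⟩
  by_contra hcon
  have hU : IsOpen {c | c ∈ N ∧ R c} := by
    rw [Metric.isOpen_iff]
    rintro c ⟨hc, hRc⟩
    obtain ⟨ρ, hρ, hρ'⟩ := Metric.isOpen_iff.1 hN c hc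
    exact ⟨ρ, hρ, fun d hd => ⟨hρ' hd, (step c d ρ hρ' hd).1 hRc⟩⟩
  have hV : IsOpen {c | c ∈ N ∧ ¬ R c} := by
    rw [Metric.isOpen_iff]
    rintro c ⟨hc, hRc⟩
    obtain ⟨ρ, hρ, hρ'⟩ := Metric.isOpen_iff.1 hN c hc
    exact ⟨ρ, hρ, fun d hd => ⟨hρ' hd, fun h => hRc ((step c d ρ hρ' hd).2 h)⟩⟩
  obtain ⟨z, -, hz1, hz2⟩ := hc _ _ hU hV (fun z hz => by
    by_cases h : R z
    · exact Or.inl ⟨hz, h⟩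
    · exact Or.inr ⟨hz, h⟩) ⟨a, ha, ha, Homeomorph.refl ℂ, OPr.refl, rfl, fun _ _ => rfl⟩
    ⟨b, hb, hb, hcon⟩
  exact hz2.2 hz1.2

def PerP (n : ℕ) : Prop := ∃ h : ℂ ≃ₜ ℂ, OPr h ∧ (∀ z, h z ≠ z) ∧ ∃ x, h^[n] x = x

theorem bl_mem_of_push {N : Set ℂ} {φ : ℂ ≃ₜ ℂ} (hφ : ∀ z, z ∉ N → φ z = z) {z : ℂ}
    (hz : z ∈ N) : φ z ∈ N := by
  by_contra h
  have h1 := hφ _ h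
  have := φ.injective h1
  rw [this] at h
  exact h hz

theorem bl_fpf_push {N : Set ℂ} {h φ : ℂ ≃ₜ ℂ} (hf : ∀ z, h z ≠ z) (hφ : ∀ z, z ∉ N → φ z = z)
    (hN : ∀ z ∈ N, h z ∉ N) (z : ℂ) : φ (h z) ≠ z := by
  intro hz
  by_cases h1 : h z ∈ N
  · have := bl_mem_of_push hφ h1
    rw [hz] at this
    exact hN z this h1
  · rw [hφ _ h1] at hz
    exact hf z hz

theorem bl_shorten {h : ℂ ≃ₜ ℂ} (hh : OPr h) (hf : ∀ z, h z ≠ z) {N : Set ℂ} (hN : IsOpen N)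
    (hc : IsPreconnected N) (hfree : ∀ z ∈ N, h z ∉ N) {b : ℂ} (hb : b ∈ N) {m : ℕ} (hm : 1 ≤ m)
    (hbm : h^[m] b ∈ N) : ∃ j, 1 ≤ j ∧ j ≤ m ∧ PerP j := by
  classical
  have hex : ∃ j, 1 ≤ j ∧ h^[j] b ∈ N := ⟨m, hm, hbm⟩
  let j := Nat.find hex
  obtain ⟨hj1, hjN⟩ := Nat.find_spec hex
  have hjm : j ≤ m := Nat.find_min' hex ⟨hm, hbm⟩
  have hmin : ∀ i, i < j → 1 ≤ i → h^[i] b ∉ N := fun i hi h1 h2 => Nat.find_min hex hi ⟨h1, h2⟩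
  obtain ⟨φ, hφ, hφ1, hφ2⟩ := bl_push hN hc hjN hb
  refine ⟨j, hj1, hjm, h.trans φ, hh.trans hφ, fun z => bl_fpf_push hf hφ2 hfree z, b, ?_⟩
  have key : ∀ i, i < j → (h.trans φ)^[i] b = h^[i] b := by
    intro i
    induction i with
    | zero => intro _; rfl
    | succ i ih =>
      intro hi
      rw [Function.iterate_succ_apply', ih (by omega), Homeomorph.trans_apply,
        ← Function.iterate_succ_apply' h]
      exact hφ2 _ (hmin _ hi (by omega))
  obtain ⟨i, hi⟩ : ∃ i, j = i + 1 := ⟨j - 1, by have : 1 ≤ j := hj1; omega⟩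
  rw [hi, Function.iterate_succ_apply', key i (by omega), Homeomorph.trans_apply,
    ← Function.iterate_succ_apply' h]
  change φ (h^[i + 1] b) = b
  rw [← hi]
  exact hφ1

theorem bl_segment_nhd {x y : ℂ} {U : Set ℂ} (hU : IsOpen U) (h : segment ℝ x y ⊆ U) :
    ∃ N, IsOpen N ∧ IsPreconnected N ∧ segment ℝ x y ⊆ N ∧ N ⊆ U := by
  have hcpt : IsCompact (segment ℝ x y) := by
    rw [segment_eq_image_lineMap]
    exact isCompact_Icc.image (by fun_prop)
  obtain ⟨δ, hδ, hδ'⟩ := hcpt.exists_thickening_subset_open hU h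
  exact ⟨_, Metric.isOpen_thickening, ((convex_segment x y).thickening δ).isPreconnected,
    Metric.self_subset_thickening hδ _, hδ'⟩

theorem bl_isCompact_segment (x y : ℂ) : IsCompact (segment ℝ x y) := by
  rw [segment_eq_image_lineMap]
  exact isCompact_Icc.image (by fun_prop)

theorem bl_free_nhd {h : ℂ ≃ₜ ℂ} {x y : ℂ} (hs : ∀ z ∈ segment ℝ x y, h z ∉ segment ℝ x y) :
    ∃ U, IsOpen U ∧ segment ℝ x y ⊆ U ∧ ∀ z ∈ U, h z ∉ U := by
  have h1 := bl_isCompact_segment x y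
  have h2 : IsCompact (h '' segment ℝ x y) := h1.image h.continuous
  obtain ⟨V, W, hV, hW, hsV, hsW, hVW⟩ := SeparatedNhds.of_isCompact_isCompact h1 h2 (by
    rw [Set.disjoint_left]
    rintro z hz ⟨w, hw, rfl⟩
    exact hs w hw hz)
  refine ⟨V ∩ h ⁻¹' W, hV.inter (hW.preimage h.continuous), fun z hz =>
    ⟨hsV hz, hsW ⟨z, hz, rfl⟩⟩, fun z hz hz' => ?_⟩
  exact Set.disjoint_left.1 hVW hz'.1 hz.2

theorem bl_segment_ball {x w : ℂ} {r : ℝ} (hr : 0 < r) (hw : ‖w - x‖ ≤ r) {z : ℂ} (hz : z ∈ segment ℝ x w) :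
    z ∈ Metric.ball x r ∨ z = w := by
  rw [segment_eq_image_lineMap] at hz
  obtain ⟨t, ⟨ht0, ht1⟩, rfl⟩ := hz
  rcases eq_or_lt_of_le ht1 with h | h
  · right; simp [h]
  · left
    simp only [Metric.mem_ball, AffineMap.lineMap_apply, vsub_eq_sub, vadd_eq_add, dist_eq_norm,
      add_sub_cancel_right, norm_smul, Real.norm_eq_abs, abs_of_nonneg ht0]
    nlinarith [norm_nonneg (w - x)]

theorem bl_no_per (n : ℕ) : 1 ≤ n → ¬ PerP n := by
  induction n using Nat.strong_induction_on with
  | _ n IH =>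
  rintro hn1 ⟨h, hh, hf, x, hx⟩
  rcases Nat.lt_or_ge n 3 with hn | hn
  · interval_cases n
    · exact hf x hx
    · exact bl_period_two hh hf x hx
  have short : ∀ N : Set ℂ, IsOpen N → IsPreconnected N → (∀ z ∈ N, h z ∉ N) → ∀ b ∈ N, ∀ m,
      1 ≤ m → m < n → h^[m] b ∉ N := by
    intro N h1 h2 h3 b hb m hm hmn hbm
    obtain ⟨j, hj1, hjm, hj⟩ := bl_shorten hh hf h1 h2 h3 hb hm hbm
    exact IH j (by omega) hj1 hj
  -- critical point
  obtain ⟨y, hy⟩ : ∃ y, ∀ z, max ‖y - x‖ ‖h y - x‖ ≤ max ‖z - x‖ ‖h z - x‖ := by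
    have hcont : Continuous (fun z => max ‖z - x‖ ‖h z - x‖) := by fun_prop
    apply hcont.exists_forall_le
    refine tendsto_atTop_mono (fun z => le_max_left _ _) ?_
    have : Tendsto (fun z : ℂ => ‖z‖ - ‖x‖) (cocompact ℂ) atTop :=
      tendsto_atTop_add_const_right _ _ (tendsto_norm_cocompact_atTop)
    exact tendsto_atTop_mono (fun z => norm_sub_norm_le z x) this
  set r := max ‖y - x‖ ‖h y - x‖ with hr
  have hr0 : 0 < r := by
    by_contra hr0
    have h1 : ‖y - x‖ ≤ 0 := (le_max_left _ _).trans (not_lt.1 hr0)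
    have h2 : ‖h y - x‖ ≤ 0 := (le_max_right _ _).trans (not_lt.1 hr0)
    have h1 := sub_eq_zero.1 (norm_le_zero_iff.1 h1)
    have h2 := sub_eq_zero.1 (norm_le_zero_iff.1 h2)
    exact hf y (h2.trans h1.symm)
  have hyr : ‖y - x‖ ≤ r := le_max_left _ _
  have hhyr : ‖h y - x‖ ≤ r := le_max_right _ _
  set B := Metric.ball x r with hB
  have hBfree : ∀ z ∈ B, h z ∉ B := by
    intro z hz hz'
    have h1 : ‖z - x‖ < r := by simpa [hB, dist_eq_norm] using hz
    have h2 : ‖h z - x‖ < r := by simpa [hB, dist_eq_norm] using hz'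
    exact absurd (hy z) (not_le.2 (max_lt h1 h2))
  have hclB : closure B = Metric.closedBall x r := closure_ball x hr0.ne'
  have ha : ∀ z, ‖z - x‖ ≤ r → h z ∉ B := by
    intro z hz hz'
    have hz1 : z ∈ closure B := by rw [hclB]; simpa [dist_eq_norm] using hz
    obtain ⟨w, hw1, hw2⟩ := mem_closure_iff.1 hz1 (h ⁻¹' B)
      (Metric.isOpen_ball.preimage h.continuous) hz'
    exact hBfree w hw2 hw1
  have hb : ∀ z ∈ B, ¬ ‖h z - x‖ ≤ r := by
    intro z hz hz'
    have hz1 : h z ∈ closure B := by rw [hclB]; simpa [dist_eq_norm] using hz'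
    obtain ⟨w, hw1, hw2⟩ := mem_closure_iff.1 hz1 (h '' B)
      (h.isOpenMap _ Metric.isOpen_ball) ⟨z, hz, rfl⟩
    obtain ⟨v, hv, rfl⟩ := hw1
    exact hBfree v hv hw2
  have hyB : y ∉ B := fun h1 => hb y h1 hhyr
  have hcl : ∀ z, z ∈ B → ‖z - x‖ ≤ r := fun z hz => by
    have : ‖z - x‖ < r := by simpa [hB, dist_eq_norm] using hz
    exact this.le
  have hle : ∀ w, ‖w - x‖ ≤ r → ∀ z ∈ segment ℝ x w, ‖z - x‖ ≤ r := by
    intro w hw z hz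
    rcases bl_segment_ball hr0 hw hz with h1 | rfl
    · exact hcl z h1
    · exact hw
  have f1 : ∀ z ∈ segment ℝ x (h y), h z ∉ segment ℝ x (h y) := by
    intro z hz hz'
    rcases bl_segment_ball hr0 hhyr hz' with h1 | h1
    · exact ha z (hle _ hhyr z hz) h1
    · have := h.injective h1
      subst this
      rcases bl_segment_ball hr0 hhyr hz with h1 | h1
      · exact hyB h1
      · exact hf _ h1.symm
  have f2 : ∀ z ∈ segment ℝ x y, h z ∉ segment ℝ x y := by
    intro z hz hz'
    rcases bl_segment_ball hr0 hyr hz' with h1 | h1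
    · exact ha z (hle _ hyr z hz) h1
    · rcases bl_segment_ball hr0 hyr hz with h2 | h2
      · exact hb z h2 (by rw [h1]; exact hyr)
      · rw [h2] at h1; exact hf _ h1
  have f3 : ∀ z ∈ segment ℝ x y, h (h z) ∉ segment ℝ x (h y) := by
    intro z hz hz'
    rcases bl_segment_ball hr0 hhyr hz' with h1 | h1
    · rcases bl_segment_ball hr0 hyr hz with h2 | h2
      · exact short B Metric.isOpen_ball (convex_ball x r).isPreconnected hBfree z h2 2
          (by omega) (by omega) h1
      · rw [h2] at h1
        exact ha _ hhyr h1
    · have h1 := h.injective h1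
      exact f2 z hz (by rw [h1]; exact right_mem_segment ℝ x y)
  obtain ⟨U1, hU1, hU1s, hU1f⟩ := bl_free_nhd f1
  obtain ⟨U2, hU2, hU2s, hU2f⟩ := bl_free_nhd f2
  obtain ⟨V, W, hV, hW, hsV, hsW, hVW⟩ := SeparatedNhds.of_isCompact_isCompact
    (bl_isCompact_segment x (h y))
    ((bl_isCompact_segment x y).image (h.continuous.comp h.continuous)) (by
    rw [Set.disjoint_left]
    rintro z hz ⟨w, hw, rfl⟩
    exact f3 w hw hz)
  obtain ⟨N, hN, hNc, hNs, hNU⟩ := bl_segment_nhd (hU1.inter hV)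
    (fun z hz => ⟨hU1s hz, hsV hz⟩)
  obtain ⟨M, hM, hMc, hMs, hMU⟩ := bl_segment_nhd
    (hU2.inter (hW.preimage (h.continuous.comp h.continuous)))
    (fun z hz => ⟨hU2s hz, hsW ⟨z, hz, rfl⟩⟩)
  have hNf : ∀ z ∈ N, h z ∉ N := fun z hz hz' => hU1f z (hNU hz).1 (hNU hz').1
  have hMf : ∀ z ∈ M, h z ∉ M := fun z hz hz' => hU2f z (hMU hz).1 (hMU hz').1
  have hMN : ∀ z ∈ M, h (h z) ∉ N := fun z hz hz' =>
    Set.disjoint_left.1 hVW (hNU hz').2 (hMU hz).2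
  have hxN : x ∈ N := hNs (left_mem_segment ℝ _ _)
  have hxM : x ∈ M := hMs (left_mem_segment ℝ _ _)
  have hyM : y ∈ M := hMs (right_mem_segment ℝ _ _)
  have hhyN : h y ∈ N := hNs (right_mem_segment ℝ _ _)
  obtain ⟨φ, hφ, hφ1, hφ2⟩ := bl_push hN hNc hxN hhyN
  obtain ⟨ψ, hψ, hψ1, hψ2⟩ := bl_push hM hMc hyM hxM
  let φ' : ℂ ≃ₜ ℂ := (h.symm.trans ψ).trans h
  have hφ' : OPr φ' := (hh.symm.trans hψ).trans hh
  have hφ'a : ∀ z, φ' z = h (ψ (h.symm z)) := fun z => rfl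
  have hφ'2 : ∀ z, h.symm z ∉ M → φ' z = z := fun z hz => by rw [hφ'a, hψ2 _ hz]; simp
  let g : ℂ ≃ₜ ℂ := (h.trans φ).trans φ'
  have hg : ∀ z, g z = φ' (φ (h z)) := fun z => rfl
  apply IH (n - 1) (by omega) (by omega)
  refine ⟨g, (hh.trans hφ).trans hφ', ?_, h x, ?_⟩
  · have h1 : ∀ z, (h.trans φ) z ≠ z := fun z => bl_fpf_push hf hφ2 hNf z
    have := bl_fpf_push (N := {z | h.symm z ∈ M}) (h := h.trans φ) (φ := φ') h1
      (fun z hz => hφ'2 z hz) (by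
      intro z hz hz'
      simp only [Set.mem_ofPred_eq, Homeomorph.trans_apply] at hz hz'
      obtain ⟨m, rfl⟩ := h.surjective z
      simp only [Homeomorph.symm_apply_apply] at hz
      rw [hφ2 _ (hMN m hz)] at hz'
      simp only [Homeomorph.symm_apply_apply] at hz'
      exact hMf m hz hz')
    exact this
  · have key : ∀ i, i + 1 < n → g^[i] (h x) = h^[i + 1] x := by
      intro i
      induction i with
      | zero => intro _; rfl
      | succ i ih =>
        intro hi
        rw [Function.iterate_succ_apply', ih (by omega), hg, ← Function.iterate_succ_apply' h]
        rw [hφ2 _ (short N hN hNc hNf x hxN _ (by omega) (by omega))]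
        apply hφ'2
        rw [Function.iterate_succ_apply' h, Homeomorph.symm_apply_apply]
        exact short M hM hMc hMf x hxM _ (by omega) (by omega)
    obtain ⟨i, rfl⟩ : ∃ i, n = i + 2 := ⟨n - 2, by omega⟩
    have : i + 2 - 1 = i + 1 := by omega
    rw [this, Function.iterate_succ_apply', key i (by omega), hg,
      ← Function.iterate_succ_apply' h, hx, hφ1, hφ'a]
    simp [hψ1]

/-- Brouwer's lemma: no recurrence of small balls. -/
theorem bl_brouwer {h : ℂ ≃ₜ ℂ} (hh : OPr h) (hf : ∀ z, h z ≠ z) {N : Set ℂ} (hN : IsOpen N)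
    (hc : IsPreconnected N) (hfree : ∀ z ∈ N, h z ∉ N) {b : ℂ} (hb : b ∈ N) {m : ℕ} (hm : 1 ≤ m) :
    h^[m] b ∉ N := by
  intro hbm
  obtain ⟨j, hj, -, hj'⟩ := bl_shorten hh hf hN hc hfree hb hm hbm
  exact bl_no_per j hj hj'

theorem bl_degree (h : ℂ ≃ₜ ℂ) : ∃ A : ℂ × ℂ → ℂ, Continuous A ∧ 
    (∀ v s, Complex.exp (A (v, s)) = h (v + Complex.exp s) - h v) ∧
    ∃ d : ℤ, ∀ v s, A (v, s + 2 * Real.pi * Complex.I) = A (v, s) + d * (2 * Real.pi * Complex.I) := by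
  obtain ⟨A, hA, hA'⟩ := bl_log_lift (X := ℂ × ℂ) (g := fun p => h (p.1 + Complex.exp p.2) - h p.1)
    (by fun_prop) (by
      rintro ⟨v, s⟩
      simp [sub_eq_zero, Complex.exp_ne_zero])
  have h1 : ∀ p : ℂ × ℂ, Complex.exp (A (p.1, p.2 + 2 * Real.pi * Complex.I) - A p) = 1 := by
    intro p
    rw [Complex.exp_sub, hA', hA', div_eq_one_iff_eq]
    · simp [Complex.exp_add, Complex.exp_two_pi_mul_I]
    · simp [sub_eq_zero, Complex.exp_ne_zero]
  obtain ⟨d, hd⟩ := Complex.exp_eq_one_iff.1 (h1 (0, 0))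
  refine ⟨A, hA, fun v s => hA' (v, s), d, fun v s => ?_⟩
  have := bl_exp_const (by fun_prop) h1 (v, s) (0, 0)
  rw [hd] at this
  linear_combination this

theorem bl_degree_unique (A B : ℂ × ℂ → ℂ) (hA : Continuous A) (hB : Continuous B)
    (hAB : ∀ p, Complex.exp (A p) = Complex.exp (B p)) (p q : ℂ × ℂ) : A p - B p = A q - B q :=
  bl_exp_const (φ := fun p => A p - B p) (by fun_prop) (by
    intro p; rw [Complex.exp_sub, hAB, div_self (Complex.exp_ne_zero _)]) p q

theorem bl_iter {A : ℂ × ℂ → ℂ} {d : ℤ} (h : ∀ v s, A (v, s + 2 * Real.pi * Complex.I) = 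
    A (v, s) + d * (2 * Real.pi * Complex.I)) (k : ℤ) (v s : ℂ) :
    A (v, s + k * (2 * Real.pi * Complex.I)) = A (v, s) + k * d * (2 * Real.pi * Complex.I) := by
  induction k with
  | zero => simp
  | succ k ih =>
    have := h v (s + k * (2 * Real.pi * Complex.I))
    push_cast at ih ⊢
    rw [ih] at this
    rw [show s + (k + 1) * (2 * Real.pi * Complex.I) = s + k * (2 * Real.pi * Complex.I) +
      2 * Real.pi * Complex.I by ring, this]
    ring
  | pred k ih =>
    have := h v (s + (-k - 1) * (2 * Real.pi * Complex.I))
    push_cast at ih ⊢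
    rw [show s + (-k - 1) * (2 * Real.pi * Complex.I) + 2 * Real.pi * Complex.I = 
      s + -k * (2 * Real.pi * Complex.I) by ring, ih] at this
    linear_combination -this

theorem bl_OPr_of_degree {h : ℂ ≃ₜ ℂ} {A : ℂ × ℂ → ℂ} (hA : Continuous A) 
    (hA' : ∀ v s, Complex.exp (A (v, s)) = h (v + Complex.exp s) - h v)
    (hd : ∀ v s, A (v, s + 2 * Real.pi * Complex.I) = A (v, s) + (1 : ℤ) * (2 * Real.pi * Complex.I)) :
    OPr h := by
  have hper := bl_iter hd
  have hper' : ∀ v s s', Complex.exp s = Complex.exp s' → A (v, s) - s = A (v, s') - s' := by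
    intro v s s' hs
    obtain ⟨k, hk⟩ := Complex.exp_eq_exp_iff_exists_int.1 hs
    rw [hk, hper]; push_cast; ring
  refine ⟨fun p => A (p.2, Complex.log (p.1 - p.2)) - Complex.log (p.1 - p.2), ?_, ?_⟩
  · rintro ⟨u0, v0⟩ huv
    apply ContinuousAt.continuousWithinAt
    have hw0 : u0 - v0 ≠ 0 := sub_ne_zero.2 huv
    let L : ℂ × ℂ → ℂ := fun p => Complex.log ((p.1 - p.2) / (u0 - v0)) + Complex.log (u0 - v0)
    have hL : ContinuousAt L (u0, v0) := by
      refine ContinuousAt.add ?_ continuousAt_const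
      refine ContinuousAt.clog (by fun_prop) ?_
      simp [div_self hw0]
    have hL2 : ContinuousAt (fun p : ℂ × ℂ => A (p.2, L p) - L p) (u0, v0) := by
      refine ContinuousAt.sub ?_ hL
      exact hA.continuousAt.comp (continuousAt_snd.prodMk hL)
    refine hL2.congr ?_
    have : ∀ᶠ p : ℂ × ℂ in 𝓝 (u0, v0), p.1 - p.2 ≠ 0 :=
      ContinuousAt.eventually_ne (by fun_prop) hw0
    filter_upwards [this] with p hp
    apply hper'
    simp only [L]
    rw [Complex.exp_add, Complex.exp_log hw0, Complex.exp_log hp, Complex.exp_log (div_ne_zero hp hw0),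
      div_mul_cancel₀ _ hw0]
  · intro u v huv
    have hw : u - v ≠ 0 := sub_ne_zero.2 huv
    rw [Complex.exp_sub, hA', Complex.exp_log hw, div_mul_cancel₀ _ hw]
    simp

theorem bl_OPr_sq (h : ℂ ≃ₜ ℂ) : OPr (h.trans h) := by
  obtain ⟨A, hA, hA', d, hd⟩ := bl_degree h
  obtain ⟨B, hB, hB', e, he⟩ := bl_degree h.symm
  have hA2 := bl_iter hd
  have hB2 := bl_iter he
  have hpi : (2 * Real.pi * Complex.I : ℂ) ≠ 0 := Complex.two_pi_I_ne_zero
  have hde : d * e = 1 := by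
    have h1 : ∀ p : ℂ × ℂ, Complex.exp (B (h p.1, A p)) = Complex.exp p.2 := by
      rintro ⟨v, s⟩
      rw [hB', hA']; simp
    have := bl_degree_unique _ _ (by fun_prop) (by fun_prop) h1 (0, 0 + 2 * Real.pi * Complex.I) (0, 0)
    simp only at this
    rw [hd, hB2] at this
    have h2 : ((d * e : ℤ) : ℂ) * (2 * Real.pi * Complex.I) = (1 : ℤ) * (2 * Real.pi * Complex.I) := by
      push_cast; linear_combination this
    exact_mod_cast mul_right_cancel₀ hpi h2
  have hdd : d * d = 1 := by
    rcases Int.eq_one_or_neg_one_of_mul_eq_one hde with h | h <;> simp [h]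
  apply bl_OPr_of_degree (A := fun p => A (h p.1, A p)) (by fun_prop)
  · intro v s
    simp only
    rw [hA', hA']; simp
  · intro v s
    simp only
    rw [hd, hA2]
    have : (d : ℂ) * d = 1 := by exact_mod_cast hdd
    rw [this]; simp

theorem bl_fact : Fact ((0 : ℝ) < 1) := ⟨one_pos⟩

theorem projA_open_quot : IsOpenQuotientMap projA := by
  have h1 : IsOpenQuotientMap (fun x : ℝ => (x : AddCircle (1 : ℝ))) :=
    QuotientAddGroup.isOpenQuotientMap_mk
  exact h1.prodMap IsOpenQuotientMap.id

theorem projA_cont : Continuous projA := projA_open_quot.continuous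

instance Ann_lpc : LocallyPathConnectedSpace Ann :=
  projA_open_quot.isQuotientMap.locallyPathConnectedSpace

theorem projA_add_int (z : ℝ × ℝ) (k : ℤ) : projA (z + ((k : ℝ), 0)) = projA z := by
  ext
  · simp only [projA, Prod.fst_add]
    rw [AddCircle.coe_add]
    have : ((k : ℝ) : AddCircle (1 : ℝ)) = 0 := by
      rw [AddCircle.coe_eq_zero_iff]; exact ⟨k, by simp⟩
    rw [this, add_zero]
  · simp [projA]

theorem projA_eq {z w : ℝ × ℝ} (h : projA z = projA w) : ∃ k : ℤ, z = w + ((k : ℝ), 0) := by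
  have h1 : ((z.1 : ℝ) : AddCircle (1 : ℝ)) = w.1 :=
    (congrArg Prod.fst h : (projA z).1 = (projA w).1)
  have h2 : z.2 = w.2 := (congrArg Prod.snd h : (projA z).2 = (projA w).2)
  have h3 : ((z.1 - w.1 : ℝ) : AddCircle (1 : ℝ)) = 0 := by
    rw [AddCircle.coe_sub, h1, sub_self]
  obtain ⟨k, hk⟩ := AddCircle.coe_eq_zero_iff (1 : ℝ) |>.1 h3
  refine ⟨k, ?_⟩
  have hk' : (k : ℝ) = z.1 - w.1 := by simpa using hk
  ext
  · simp [hk']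
  · simp [h2]

/-- Exponential embedding of the annulus in the plane. -/
def expA (a : Ann) : ℂ := (AddCircle.toCircle a.1 : ℂ) * Complex.exp (-(a.2 : ℂ))

theorem expA_cont : Continuous expA := by
  unfold expA
  have : Continuous (fun x : AddCircle (1 : ℝ) => (AddCircle.toCircle x : ℂ)) :=
    continuous_subtype_val.comp AddCircle.continuous_toCircle
  exact (this.comp continuous_fst).mul (by fun_prop)

theorem expA_norm (a : Ann) : ‖expA a‖ = Real.exp (-a.2) := by
  rw [expA, norm_mul, Circle.norm_coe, Complex.norm_exp]; simp

theorem expA_ne (a : Ann) : expA a ≠ 0 := by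
  rw [← norm_pos_iff, expA_norm]; positivity

theorem expA_inj {a b : Ann} (h : expA a = expA b) : a = b := by
  have h1 : a.2 = b.2 := by
    have := congrArg norm h
    rw [expA_norm, expA_norm] at this
    linarith [Real.exp_injective this]
  unfold expA at h
  rw [h1] at h
  have h2 := mul_right_cancel₀ (Complex.exp_ne_zero _) h
  have h3 := AddCircle.injective_toCircle one_ne_zero (Subtype.ext h2)
  exact Prod.ext h3 h1

theorem expA_proj (z : ℝ × ℝ) :
    expA (projA z) = Complex.exp (2 * Real.pi * z.1 * Complex.I - z.2) := by
  simp only [expA, projA]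
  rw [AddCircle.toCircle_apply_mk, Circle.coe_exp, ← Complex.exp_add]
  congr 1
  push_cast; ring

theorem bl_cross {β : ℝ → ℝ × ℝ} {δ : ℝ → Ann} (hβ : Continuous β) (hδ : Continuous δ)
    (hne : ∀ s t, projA (β t) ≠ δ s) {k : ℤ} (hk : β 1 = β 0 + ((k : ℝ), 0)) {s1 s2 : ℝ}
    (h1 : ∀ t, (β t).2 < (δ s1).2) (h2 : ∀ t, (δ s2).2 < (β t).2) : k = 0 := by
  have hpe : Continuous (fun t => expA (projA (β t))) := (expA_cont.comp projA_cont).comp hβ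
  have hde : Continuous (fun s => expA (δ s)) := expA_cont.comp hδ
  obtain ⟨L, hL, hL'⟩ := bl_log_lift (X := ℝ × ℝ) (g := fun p => expA (projA (β p.2)) - expA (δ p.1))
    ((hpe.comp continuous_snd).sub (hde.comp continuous_fst))
    (fun p => sub_ne_zero.2 (fun h => hne _ _ (expA_inj h)))
  have hend : projA (β 1) = projA (β 0) := by rw [hk, projA_add_int]
  have hn := bl_exp_const (X := ℝ) (φ := fun s => L (s, 1) - L (s, 0)) (by fun_prop) (by
    intro s
    rw [Complex.exp_sub, hL', hL']
    simp only [hend]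
    exact div_self (sub_ne_zero.2 (fun h => hne _ _ (expA_inj h)))) s1 s2
  have hlog : ∀ w : ℂ, ‖w‖ < 1 → 1 - w ∈ Complex.slitPlane := by
    intro w hw
    rw [sub_eq_add_neg]
    exact Complex.mem_slitPlane_of_norm_lt_one (by simpa using hw)
  have hs1 : ∀ t, 1 - expA (δ s1) / expA (projA (β t)) ∈ Complex.slitPlane := by
    intro t
    apply hlog
    rw [norm_div, expA_norm, expA_norm, div_lt_one (by positivity)]
    apply Real.exp_lt_exp.2
    have := h1 t
    simp only [projA]; linarith
  have hs2 : ∀ t, 1 - expA (projA (β t)) / expA (δ s2) ∈ Complex.slitPlane := by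
    intro t
    apply hlog
    rw [norm_div, expA_norm, expA_norm, div_lt_one (by positivity)]
    apply Real.exp_lt_exp.2
    have := h2 t
    simp only [projA]; linarith
  have e1 := bl_exp_const (X := ℝ) (φ := fun t => L (s1, t) -
      (2 * Real.pi * (β t).1 * Complex.I - (β t).2) -
      Complex.log (1 - expA (δ s1) / expA (projA (β t)))) (by
      refine Continuous.sub (by fun_prop) (Continuous.clog ?_ hs1)
      exact continuous_const.sub (continuous_const.div hpe (fun t => expA_ne _))) (by
      intro t
      have h0 := expA_ne (projA (β t))
      rw [Complex.exp_sub, Complex.exp_sub, hL', ← expA_proj,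
        Complex.exp_log (Complex.slitPlane_ne_zero (hs1 t)), div_div, div_eq_one_iff_eq]
      · field_simp
      · exact mul_ne_zero h0 (Complex.slitPlane_ne_zero (hs1 t))) 1 0
  have e2 := bl_exp_const (X := ℝ) (φ := fun t => L (s2, t) - Complex.log (- expA (δ s2)) -
      Complex.log (1 - expA (projA (β t)) / expA (δ s2))) (by
      refine Continuous.sub (by fun_prop) (Continuous.clog ?_ hs2)
      exact continuous_const.sub (hpe.div continuous_const (fun t => expA_ne _))) (by
      intro t
      have h0 := expA_ne (δ s2)
      rw [Complex.exp_sub, Complex.exp_sub, hL', Complex.exp_log (neg_ne_zero.2 h0),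
        Complex.exp_log (Complex.slitPlane_ne_zero (hs2 t)), div_div, div_eq_one_iff_eq]
      · field_simp; ring
      · exact mul_ne_zero (neg_ne_zero.2 h0) (Complex.slitPlane_ne_zero (hs2 t))) 1 0
  simp only [hend] at e1 e2
  rw [hk] at e1
  simp only [Prod.fst_add, Prod.snd_add, add_zero] at e1
  push_cast at e1
  have : (k : ℂ) * (2 * Real.pi * Complex.I) = 0 := by linear_combination hn - e1 + e2
  have := (mul_eq_zero.1 this).resolve_right Complex.two_pi_I_ne_zero
  exact_mod_cast this

theorem bl_inessential {D : Set (ℝ × ℝ)} (hD : IsOpen D) (hDc : IsPreconnected D) {S : Set Ann}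
    (hS : IsPreconnected S) (hDS : ∀ d ∈ D, projA d ∉ S) {M : ℝ}
    (hup : ∀ z : Ann, M < z.2 → z ∈ S) (hlo : ∀ z : Ann, M < - z.2 → z ∈ S)
    {d : ℝ × ℝ} {k : ℤ} (hd : d ∈ D) (hd' : d + ((k : ℝ), 0) ∈ D) : k = 0 := by
  have hpc : IsPathConnected D := (hD.isConnected_iff_isPathConnected).1 ⟨⟨d, hd⟩, hDc⟩
  obtain ⟨β, hβ⟩ := hpc.joinedIn _ hd _ hd'
  let Γ : Set Ann := Set.range (fun t => projA (β t))
  have hΓ : IsCompact Γ := isCompact_range (projA_cont.comp β.continuous)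
  have hSΓ : S ⊆ Γᶜ := by
    rintro s hs ⟨t, rfl⟩
    exact hDS _ (hβ t) hs
  obtain ⟨R, hR⟩ := (hΓ.image continuous_snd).isBounded.exists_norm_le
  have hR' : ∀ t, |(β t).2| ≤ R := fun t => hR _ ⟨_, ⟨t, rfl⟩, rfl⟩
  let a : Ann := (0, max M R + 1)
  let b : Ann := (0, - (max M R + 1))
  have hM := le_max_left M R
  have hMR := le_max_right M R
  have ha : a ∈ S := hup _ (by simp only [a]; linarith)
  have hb : b ∈ S := hlo _ (by simp only [b]; linarith)
  have hV := hS.subset_connectedComponentIn ha hSΓ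
  have hVo : IsOpen (connectedComponentIn Γᶜ a) := hΓ.isClosed.isOpen_compl.connectedComponentIn
  have hVp : IsPathConnected (connectedComponentIn Γᶜ a) :=
    (hVo.isConnected_iff_isPathConnected).1 ⟨⟨a, hV ha⟩, isPreconnected_connectedComponentIn⟩
  obtain ⟨δ, hδ⟩ := hVp.joinedIn _ (hV ha) _ (hV hb)
  have hext : ∀ t, ∃ u, β.extend t = β u := fun t => ⟨Set.projIcc 0 1 zero_le_one t, rfl⟩
  have hext' : ∀ t, ∃ u, δ.extend t = δ u := fun t => ⟨Set.projIcc 0 1 zero_le_one t, rfl⟩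
  apply bl_cross (β := β.extend) (δ := δ.extend) β.continuous_extend δ.continuous_extend
    (s1 := 0) (s2 := 1) (k := k)
  · intro s t h
    obtain ⟨u, hu⟩ := hext t
    obtain ⟨v, hv⟩ := hext' s
    rw [hu, hv] at h
    have := connectedComponentIn_subset _ _ (hδ v)
    exact this ⟨u, h⟩
  · simp
  · intro t
    obtain ⟨u, hu⟩ := hext t
    rw [hu]
    have := (abs_le.1 (hR' u)).2
    simp only [Path.extend_zero, a]; linarith
  · intro t
    obtain ⟨u, hu⟩ := hext t
    rw [hu]
    have := (abs_le.1 (hR' u)).1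
    simp only [Path.extend_one, b]; linarith

theorem bl_unicoherent {X Y : Set Ann} (hX : IsClosed X) (hY : IsClosed Y) (hXc : IsPreconnected X)
    (hYc : IsPreconnected Y) (hXY : X ∪ Y = Set.univ) (y0 : ℝ) (hend : ∀ z : Ann, z.2 = y0 → z ∉ X) :
    IsPreconnected (X ∩ Y) := by
  classical
  rw [isPreconnected_closed_iff]
  intro P Q hP hQ hPQ ⟨p, hp, hpP⟩ ⟨q, hq, hqQ⟩
  by_contra hcon
  rw [Set.not_nonempty_iff_eq_empty] at hcon
  obtain ⟨l, hl0, hl1, -⟩ := exists_continuous_zero_one_of_isClosed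
    ((hX.inter hY).inter hP) ((hX.inter hY).inter hQ) (by
      rw [Set.disjoint_left]
      intro z hz hz'
      have : z ∈ X ∩ Y ∩ (P ∩ Q) := ⟨hz.1, hz.2, hz'.2⟩
      rw [hcon] at this; exact this)
  have hlc : Continuous (fun z => (l z : ℂ)) := Complex.continuous_ofReal.comp l.continuous
  let ψ : Ann → ℂ := fun z => if z ∈ X then Complex.exp (Real.pi * Complex.I * l z) else
    Complex.exp (-(Real.pi * Complex.I * l z))
  have hagree : ∀ z, z ∈ X → z ∈ Y → Complex.exp (Real.pi * Complex.I * l z) =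
      Complex.exp (-(Real.pi * Complex.I * l z)) := by
    intro z hzX hzY
    rcases hPQ ⟨hzX, hzY⟩ with h | h
    · have : l z = 0 := hl0 ⟨⟨hzX, hzY⟩, h⟩
      simp [this]
    · have : l z = 1 := hl1 ⟨⟨hzX, hzY⟩, h⟩
      simp [this, Complex.exp_neg, Complex.exp_pi_mul_I]
  have hψ : Continuous ψ := by
    refine Continuous.if ?_ (by fun_prop) (by fun_prop)
    intro z hz
    have hz' : z ∈ frontier X := hz
    refine hagree z (hX.frontier_subset hz') ?_
    have h1 : z ∈ closure Xᶜ := by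
      rw [frontier_eq_closure_inter_closure] at hz'; exact hz'.2
    refine closure_minimal ?_ hY h1
    intro w hw
    have : w ∈ X ∪ Y := by rw [hXY]; trivial
    exact this.resolve_left hw
  have hψX : ∀ z ∈ X, ψ z = Complex.exp (Real.pi * Complex.I * l z) := fun z hz => if_pos hz
  have hψY : ∀ z ∈ Y, ψ z = Complex.exp (-(Real.pi * Complex.I * l z)) := by
    intro z hz
    by_cases h : z ∈ X
    · rw [hψX z h]; exact hagree z h hz
    · exact if_neg h
  have hψ0 : ∀ z, ψ z ≠ 0 := by
    intro z; simp only [ψ]; split_ifs <;> exact Complex.exp_ne_zero _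
  obtain ⟨θ, hθ, hθ'⟩ := bl_log_lift (X := ℝ × ℝ) (g := fun z => ψ (projA z))
    (hψ.comp projA_cont) (fun z => hψ0 _)
  have hper1 : ∀ z : ℝ × ℝ, projA (z + (1, 0)) = projA z := by
    intro z; have := projA_add_int z 1; simpa using this
  have hc := bl_exp_const (X := ℝ × ℝ) (φ := fun z => θ (z + (1, 0)) - θ z) (by fun_prop) (by
    intro z
    rw [Complex.exp_sub, hθ', hθ', hper1, div_self (hψ0 _)])
  have hc0 := bl_exp_const (X := ℝ) (φ := fun t => θ (t, y0) + Real.pi * Complex.I * l (projA (t, y0)))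
    (by
      refine Continuous.add (by fun_prop) (continuous_const.mul (hlc.comp (projA_cont.comp ?_)))
      fun_prop) (by
    intro t
    have h1 : projA (t, y0) ∉ X := hend _ rfl
    have h2 : ψ (projA (t, y0)) = Complex.exp (-(Real.pi * Complex.I * l (projA (t, y0)))) := if_neg h1
    rw [Complex.exp_add, hθ', h2, ← Complex.exp_add]; simp) 1 0
  have h10 : projA (1, y0) = projA (0, y0) := by
    have := hper1 (0, y0); simpa using this
  rw [h10] at hc0
  have hper : ∀ z, θ (z + (1, 0)) = θ z := by
    intro z
    have := hc z (0, y0)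
    simp only [Prod.mk_add_mk, zero_add, add_zero] at this
    linear_combination this + hc0
  have hperN : ∀ (n : ℕ) z, θ (z + ((n : ℝ), 0)) = θ z := by
    intro n
    induction n with
    | zero => intro z; congr 1; ext <;> simp
    | succ n ih =>
      intro z
      rw [← ih z, ← hper (z + ((n : ℝ), 0))]
      congr 1
      ext <;> simp [add_assoc]
  have hperZ : ∀ (k : ℤ) z, θ (z + ((k : ℝ), 0)) = θ z := by
    intro k z
    obtain ⟨n, rfl | rfl⟩ := k.eq_nat_or_neg
    · exact_mod_cast hperN n z
    · rw [← hperN n (z + _)]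
      congr 1
      ext <;> simp
  let Θ : Ann → ℂ := fun a => θ (Function.surjInv projA_open_quot.surjective a)
  have hΘp : ∀ z, Θ (projA z) = θ z := by
    intro z
    obtain ⟨k, hk⟩ := projA_eq (Function.surjInv_eq projA_open_quot.surjective (projA z))
    simp only [Θ]
    rw [hk, hperZ]
  have hΘ : Continuous Θ := by
    rw [projA_open_quot.isQuotientMap.continuous_iff]
    exact hθ.congr (fun z => (hΘp z).symm)
  have hΘe : ∀ a, Complex.exp (Θ a) = ψ a := fun a => by
    obtain ⟨z, rfl⟩ := projA_open_quot.surjective a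
    rw [hΘp, hθ']
  have hlp : l p = 0 := hl0 ⟨hp, hpP⟩
  have hlq : l q = 1 := hl1 ⟨hq, hqQ⟩
  have : PreconnectedSpace X := isPreconnected_iff_preconnectedSpace.1 hXc
  have : PreconnectedSpace Y := isPreconnected_iff_preconnectedSpace.1 hYc
  have eX := bl_exp_const (X := X) (φ := fun z => Θ z - Real.pi * Complex.I * l z) (by fun_prop) (by
    intro z
    rw [Complex.exp_sub, hΘe, hψX z z.2, div_self (Complex.exp_ne_zero _)]) ⟨p, hp.1⟩ ⟨q, hq.1⟩
  have eY := bl_exp_const (X := Y) (φ := fun z => Θ z + Real.pi * Complex.I * l z) (by fun_prop) (by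
    intro z
    rw [Complex.exp_add, hΘe, hψY z z.2, ← Complex.exp_add]; simp) ⟨p, hp.2⟩ ⟨q, hq.2⟩
  simp only [hlp, hlq] at eX eY
  apply Complex.two_pi_I_ne_zero
  push_cast at eX eY
  linear_combination eX - eY

theorem bl_closure_comp {X : Type*} [TopologicalSpace X] [LocallyConnectedSpace X] {K : Set X}
    (hK : IsClosed K) (z : X) :
    closure (connectedComponentIn Kᶜ z) ⊆ connectedComponentIn Kᶜ z ∪ K := by
  intro w hw
  by_cases hwK : w ∈ K
  · exact Or.inr hwK
  · left
    have hwo : IsOpen (connectedComponentIn Kᶜ w) := hK.isOpen_compl.connectedComponentIn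
    obtain ⟨v, hv1, hv2⟩ := mem_closure_iff.1 hw _ hwo (mem_connectedComponentIn hwK)
    rw [connectedComponentIn_eq hv2, ← connectedComponentIn_eq hv1]
    exact mem_connectedComponentIn hwK

theorem bl_compl_comp {X : Type*} [TopologicalSpace X] [LocallyConnectedSpace X] [PreconnectedSpace X]
    {K : Set X} (hK : IsClosed K) (hKc : IsConnected K) (x : X) :
    IsPreconnected (connectedComponentIn Kᶜ x)ᶜ := by
  obtain ⟨k0, hk0⟩ := hKc.nonempty
  have hKL : K ⊆ (connectedComponentIn Kᶜ x)ᶜ := fun k hk hk' =>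
    connectedComponentIn_subset _ _ hk' hk
  refine isPreconnected_of_forall k0 (fun z hz => ?_)
  by_cases hzK : z ∈ K
  · exact ⟨K, hKL, hk0, hzK, hKc.isPreconnected⟩
  set W := connectedComponentIn Kᶜ z with hW
  have hzW : z ∈ W := mem_connectedComponentIn hzK
  have hWo : IsOpen W := hK.isOpen_compl.connectedComponentIn
  have hWK := bl_closure_comp hK z
  have hmeet : (closure W ∩ K).Nonempty := by
    by_contra hcon
    have hcl : closure W ⊆ W := by
      intro w hw
      rcases hWK hw with h | h
      · exact h
      · exact absurd ⟨w, hw, h⟩ hcon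
    have hclosed : IsClosed W := isClosed_of_closure_subset hcl
    have : W = Set.univ := IsClopen.eq_univ ⟨hclosed, hWo⟩ ⟨z, hzW⟩
    have hk : k0 ∈ W := by rw [this]; trivial
    exact connectedComponentIn_subset _ _ hk hk0
  obtain ⟨c, hc1, hc2⟩ := hmeet
  refine ⟨closure W ∪ K, ?_, Or.inr hk0, Or.inl (subset_closure hzW),
    IsPreconnected.union c hc1 hc2 isPreconnected_connectedComponentIn.closure hKc.isPreconnected⟩
  rintro w (hw | hw)
  · rcases hWK hw with h | h
    · intro h'
      apply hz
      rw [connectedComponentIn_eq h', ← connectedComponentIn_eq h]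
      exact hzW
    · exact hKL h
  · exact hKL hw

/-- A decomposition of the complement of `E` in two open connected pieces, one per end. -/
structure AnnSplit (E P Q : Set Ann) (σ : ℝ) : Prop where
  oP : IsOpen P
  oQ : IsOpen Q
  cP : IsPreconnected P
  cQ : IsPreconnected Q
  disj : Disjoint P Q
  un : P ∪ Q = Eᶜ
  sg : σ = 1 ∨ σ = -1
  ends : ∃ M : ℝ, (∀ z : Ann, M < σ * z.2 → z ∈ P) ∧ (∀ z : Ann, M < -σ * z.2 → z ∈ Q)

instance Ann_conn : PreconnectedSpace Ann := by
  exact projA_open_quot.surjective.denseRange.preconnectedSpace projA_cont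

theorem AnnSplit.swap {E P Q : Set Ann} {σ : ℝ} (h : AnnSplit E P Q σ) : AnnSplit E Q P (-σ) := by
  obtain ⟨M, h1, h2⟩ := h.ends
  refine ⟨h.oQ, h.oP, h.cQ, h.cP, h.disj.symm, by rw [Set.union_comm, h.un], ?_, M, h2, ?_⟩
  · rcases h.sg with h | h <;> simp [h]
  · simpa using h1

theorem AnnSplit.comp {E P Q : Set Ann} {σ : ℝ} (h : AnnSplit E P Q σ) {w : Ann} (hw : w ∈ P) :
    connectedComponentIn Eᶜ w = P := by
  have hPE : P ⊆ Eᶜ := h.un ▸ Set.subset_union_left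
  apply Set.Subset.antisymm
  · refine IsPreconnected.subset_left_of_subset_union h.oP h.oQ h.disj ?_ ⟨w, ?_, hw⟩
      isPreconnected_connectedComponentIn
    · rw [h.un]; exact connectedComponentIn_subset _ _
    · exact mem_connectedComponentIn (hPE hw)
  · exact h.cP.subset_connectedComponentIn hw hPE

theorem AnnSplit.neP {E P Q : Set Ann} {σ : ℝ} (h : AnnSplit E P Q σ) : P.Nonempty := by
  obtain ⟨M, h1, h2⟩ := h.ends
  refine ⟨(0, σ * (M + 1)), h1 _ ?_⟩
  rcases h.sg with h | h <;> simp [h]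

theorem AnnSplit.closureP {E P Q : Set Ann} {σ : ℝ} (h : AnnSplit E P Q σ) {z : Ann} (hz : z ∈ Q) :
    z ∉ closure P := fun hc => by
  obtain ⟨v, hv1, hv2⟩ := mem_closure_iff.1 hc _ h.oQ hz
  exact Set.disjoint_left.1 h.disj hv2 hv1

theorem AnnSplit.notBdd {E P Q : Set Ann} {σ : ℝ} (h : AnnSplit E P Q σ) : ¬ BoundedA P := by
  rintro ⟨⟨a, ha⟩, ⟨b, hb⟩⟩
  obtain ⟨M, h1, h2⟩ := h.ends
  rcases h.sg with hs | hs
  · have := ha ⟨((0, max a M + 1) : Ann), h1 _ (by simp [hs]; linarith [le_max_right a M]), rfl⟩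
    simp only at this
    linarith [le_max_left a M]
  · have := hb ⟨((0, min b (-M) - 1) : Ann), h1 _ (by simp [hs]; linarith [min_le_right b (-M)]), rfl⟩
    simp only at this
    linarith [min_le_left b (-M)]

theorem split_of_annular {E : Set Ann} (h : IsAnnularContinuum E) :
    ∃ P Q, AnnSplit E P Q 1 := by
  obtain ⟨hc, hcon, hb, x, y, hx, hy, hxy, hall⟩ := h
  obtain ⟨M, hM⟩ : ∃ M : ℝ, ∀ z ∈ E, |z.2| ≤ M := by
    obtain ⟨M, hM⟩ := (hc.image (f := fun z : Ann => |z.2|) (by fun_prop)).bddAbove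
    exact ⟨M, fun z hz => hM ⟨z, hz, rfl⟩⟩
  have hT : IsPreconnected {z : Ann | M < z.2} := by
    have : {z : Ann | M < z.2} = Set.univ ×ˢ Set.Ioi M := by ext; simp
    rw [this]
    have : PreconnectedSpace (AddCircle (1:ℝ)) :=
      DenseRange.preconnectedSpace (QuotientAddGroup.mk_surjective).denseRange
        (AddCircle.continuous_mk' (1:ℝ))
    exact isPreconnected_univ.prod isPreconnected_Ioi
  have hB : IsPreconnected {z : Ann | M < -z.2} := by
    have : {z : Ann | M < -z.2} = Set.univ ×ˢ Set.Iio (-M) := by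
      ext z; simp only [Set.mem_ofPred_eq, Set.mem_prod, Set.mem_univ, true_and, Set.mem_Iio]
      constructor <;> intro h <;> linarith
    rw [this]
    have : PreconnectedSpace (AddCircle (1:ℝ)) :=
      DenseRange.preconnectedSpace (QuotientAddGroup.mk_surjective).denseRange
        (AddCircle.continuous_mk' (1:ℝ))
    exact isPreconnected_univ.prod isPreconnected_Iio
  have hTE : {z : Ann | M < z.2} ⊆ Eᶜ := fun z hz hzE => by
    have := (abs_le.1 (hM z hzE)).2
    simp only [Set.mem_ofPred_eq] at hz; linarith
  have hBE : {z : Ann | M < -z.2} ⊆ Eᶜ := fun z hz hzE => by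
    have := (abs_le.1 (hM z hzE)).1
    simp only [Set.mem_ofPred_eq] at hz; linarith
  let t0 : Ann := (0, M + 1)
  let b0 : Ann := (0, -(M + 1))
  have ht0 : t0 ∈ {z : Ann | M < z.2} := by simp [t0]
  have hb0 : b0 ∈ {z : Ann | M < -z.2} := by simp [b0]
  have hTU := hT.subset_connectedComponentIn ht0 hTE
  have hBU := hB.subset_connectedComponentIn hb0 hBE
  have key : ∀ z ∈ Eᶜ, connectedComponentIn Eᶜ z = connectedComponentIn Eᶜ t0 ∨
      connectedComponentIn Eᶜ z = connectedComponentIn Eᶜ b0 := by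
    intro z hz
    have h1 := hb z hz
    unfold BoundedA at h1
    rw [not_and_or] at h1
    rcases h1 with h1 | h1
    · left
      rw [not_bddAbove_iff] at h1
      obtain ⟨_, ⟨v, hv, rfl⟩, hv2⟩ := h1 M
      rw [connectedComponentIn_eq hv, ← connectedComponentIn_eq (hTU hv2)]
    · right
      rw [not_bddBelow_iff] at h1
      obtain ⟨_, ⟨v, hv, rfl⟩, hv2⟩ := h1 (-M)
      have hv3 : v ∈ {z : Ann | M < -z.2} := by
        simp only [Set.mem_ofPred_eq]; linarith
      rw [connectedComponentIn_eq hv, ← connectedComponentIn_eq (hBU hv3)]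
  have hne : connectedComponentIn Eᶜ t0 ≠ connectedComponentIn Eᶜ b0 := by
    intro he
    apply hxy
    rcases key x hx with h | h <;> rcases key y hy with h' | h' <;> simp [h, h', he]
  have hEo : IsOpen Eᶜ := hc.isClosed.isOpen_compl
  refine ⟨connectedComponentIn Eᶜ t0, connectedComponentIn Eᶜ b0, hEo.connectedComponentIn,
    hEo.connectedComponentIn, isPreconnected_connectedComponentIn,
    isPreconnected_connectedComponentIn, ?_, ?_, Or.inl rfl, M, ?_, ?_⟩
  · rw [Set.disjoint_left]
    intro v hv hv'
    exact hne (by rw [connectedComponentIn_eq hv, ← connectedComponentIn_eq hv'])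
  · apply Set.Subset.antisymm
    · exact Set.union_subset (connectedComponentIn_subset _ _) (connectedComponentIn_subset _ _)
    · intro z hz
      have := mem_connectedComponentIn hz
      rcases key z hz with h | h
      · left; rwa [← h]
      · right; rwa [← h]
  · intro z hz; exact hTU (by simpa using hz)
  · intro z hz; exact hBU (by simpa using hz)

theorem annular_of_split {E P Q : Set Ann} {σ : ℝ} (hc : IsCompact E) (hcon : IsConnected E)
    (h : AnnSplit E P Q σ) : IsAnnularContinuum E := by
  obtain ⟨p, hp⟩ := h.neP
  obtain ⟨q, hq⟩ := h.swap.neP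
  have hcp : ∀ z ∈ P, connectedComponentIn Eᶜ z = P := fun z hz => h.comp hz
  have hcq : ∀ z ∈ Q, connectedComponentIn Eᶜ z = Q := fun z hz => h.swap.comp hz
  have hpE : p ∈ Eᶜ := h.un ▸ Or.inl hp
  have hqE : q ∈ Eᶜ := h.un ▸ Or.inr hq
  refine ⟨hc, hcon, ?_, p, q, hpE, hqE, ?_, ?_⟩
  · intro z hz
    rw [← h.un] at hz
    rcases hz with hz | hz
    · rw [hcp z hz]; exact h.notBdd
    · rw [hcq z hz]; exact h.swap.notBdd
  · rw [hcp p hp, hcq q hq]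
    intro he
    exact Set.disjoint_left.1 h.disj hp (he ▸ hp)
  · intro z hz
    rw [← h.un] at hz
    rcases hz with hz | hz
    · left; rw [hcp z hz, hcp p hp]
    · right; rw [hcq z hz, hcq q hq]

theorem AnnSplit.complP {E P Q : Set Ann} {σ : ℝ} (h : AnnSplit E P Q σ) (hE : IsClosed E)
    (hEc : IsConnected E) : IsPreconnected Pᶜ := by
  obtain ⟨p, hp⟩ := h.neP
  have := bl_compl_comp hE hEc p
  rwa [h.comp hp] at this

theorem circloid_max {C P Q : Set Ann} {σ : ℝ} (hC : IsCircloidA C) (h : AnnSplit C P Q σ)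
    {S : Set Ann} (hS : IsPreconnected S) (hSP : S ∩ closure P = ∅) (hSQ : (S ∩ Q).Nonempty) :
    S ⊆ Q := by
  obtain ⟨q, hqS, hq⟩ := hSQ
  have hCc := hC.1.1.isClosed
  set L := connectedComponentIn (closure P)ᶜ q with hL
  have hQcl : Q ⊆ (closure P)ᶜ := fun z hz => h.closureP hz
  have hQL : Q ⊆ L := h.cQ.subset_connectedComponentIn hq hQcl
  have hSL : S ⊆ L := hS.subset_connectedComponentIn hqS (fun z hz hz' => by
    have : z ∈ S ∩ closure P := ⟨hz, hz'⟩
    rw [hSP] at this; exact this)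
  have hLo : IsOpen L := isClosed_closure.isOpen_compl.connectedComponentIn
  have hPL : Disjoint P L := by
    rw [Set.disjoint_left]
    intro z hz hz'
    exact connectedComponentIn_subset _ _ hz' (subset_closure hz)
  have hEC : (P ∪ L)ᶜ ⊆ C := by
    intro z hz
    by_contra hzC
    have : z ∈ P ∪ Q := h.un ▸ hzC
    exact hz (Set.union_subset_union_right _ hQL this)
  have hPc := h.complP hCc hC.1.2.1
  have hLc : IsPreconnected Lᶜ := bl_compl_comp isClosed_closure ⟨h.neP.closure, h.cP.closure⟩ q
  obtain ⟨M, h1, h2⟩ := h.ends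
  have hEc : IsPreconnected (P ∪ L)ᶜ := by
    rw [Set.compl_union]
    refine bl_unicoherent h.oP.isClosed_compl hLo.isClosed_compl hPc hLc ?_ (σ * (M + 1)) ?_
    · rw [← Set.compl_inter, hPL.inter_eq, Set.compl_empty]
    · intro z hz hz'
      refine hz' (h1 z ?_)
      rw [hz]
      rcases h.sg with h | h <;> simp [h]
  have hEne : ((P ∪ L)ᶜ).Nonempty := by
    rw [Set.nonempty_compl]
    intro hu
    obtain ⟨z, -, hz⟩ := isPreconnected_univ P L h.oP hLo hu.ge
      (by simpa using h.neP) (by simpa using ⟨q, hQL hq⟩)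
    exact Set.disjoint_left.1 hPL hz.1 hz.2
  have hEcl : IsClosed (P ∪ L)ᶜ := (h.oP.union hLo).isClosed_compl
  have hspl : AnnSplit (P ∪ L)ᶜ P L σ :=
    ⟨h.oP, hLo, h.cP, isPreconnected_connectedComponentIn, hPL, (compl_compl _).symm, h.sg, M, h1,
      fun z hz => hQL (h2 z hz)⟩
  have hE := hC.2 _ hEC (annular_of_split (hC.1.1.of_isClosed_subset hEcl hEC) ⟨hEne, hEc⟩ hspl)
  have hun : P ∪ L = P ∪ Q := by rw [h.un, ← hE, compl_compl]
  intro z hz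
  have : z ∈ P ∪ Q := hun ▸ Or.inr (hSL hz)
  rcases this with h' | h'
  · exact absurd (hSL hz) (Set.disjoint_left.1 hPL h')
  · exact h'

theorem circloid_sub {C₁ C₂ P₁ Q₁ P₂ Q₂ : Set Ann} {σ : ℝ} 
    (hC₂ : IsCircloidA C₂) (h₁ : AnnSplit C₁ P₁ Q₁ σ) (h₂ : AnnSplit C₂ P₂ Q₂ σ)
    (hd : P₁ ∩ Q₂ = ∅) : P₁ ⊆ P₂ := by
  refine circloid_max hC₂ h₂.swap h₁.cP ?_ ?_
  · rw [← Set.disjoint_iff_inter_eq_empty]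
    exact (Set.disjoint_iff_inter_eq_empty.2 hd).closure_right h₁.oP
  · obtain ⟨M, h1, -⟩ := h₁.ends
    obtain ⟨N, h2, -⟩ := h₂.ends
    refine ⟨(0, σ * (max M N + 1)), h1 _ ?_, h2 _ ?_⟩
    · rcases h₁.sg with h | h <;> simp [h] <;> linarith [le_max_left M N]
    · rcases h₁.sg with h | h <;> simp [h] <;> linarith [le_max_right M N]

theorem circloid_eq {C₁ C₂ P₁ Q₁ P₂ Q₂ : Set Ann} {σ : ℝ} (hC₁ : IsCircloidA C₁)
    (hC₂ : IsCircloidA C₂) (h₁ : AnnSplit C₁ P₁ Q₁ σ) (h₂ : AnnSplit C₂ P₂ Q₂ σ)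
    (hd : P₁ ∩ Q₂ = ∅) (hd' : P₂ ∩ Q₁ = ∅) : C₁ = C₂ := by
  have e1 : P₁ = P₂ := (circloid_sub hC₂ h₁ h₂ hd).antisymm (circloid_sub hC₁ h₂ h₁ hd')
  have e2 : Q₁ = Q₂ := (circloid_sub hC₂ h₁.swap h₂.swap (by rwa [Set.inter_comm])).antisymm
    (circloid_sub hC₁ h₂.swap h₁.swap (by rwa [Set.inter_comm]))
  rw [← compl_compl C₁, ← h₁.un, e1, e2, h₂.un, compl_compl]

theorem iter_homeo {X : Type*} [TopologicalSpace X] (f : X ≃ₜ X) (n : ℕ) :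
    ∃ F : X ≃ₜ X, ∀ x, F x = f^[n] x := by
  induction n with
  | zero => exact ⟨Homeomorph.refl X, fun x => rfl⟩
  | succ n ih =>
    obtain ⟨F, hF⟩ := ih
    exact ⟨f.trans F, fun x => by rw [Homeomorph.trans_apply, hF, Function.iterate_succ_apply]⟩

theorem nw_many {X : Type*} [TopologicalSpace X] {f : X → X} (hf : Continuous f)
    (hnw : NonWandering f) (r : ℕ) : ∀ U : Set X, IsOpen U → U.Nonempty →
    ∃ A : Finset ℕ, A.card = r + 1 ∧ ∃ x, ∀ a ∈ A, f^[a] x ∈ U := by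
  induction r with
  | zero => rintro U - ⟨x, hx⟩; exact ⟨{0}, by simp, x, by simpa using hx⟩
  | succ r ih =>
    intro U hU hne
    obtain ⟨n, hn, _, ⟨u, hu, rfl⟩, hu'⟩ := hnw U hU hne
    obtain ⟨A, hA, x, hx⟩ := ih (U ∩ f^[n] ⁻¹' U) (hU.inter (hU.preimage (hf.iterate n)))
      ⟨u, hu, hu'⟩
    have hAn : A.Nonempty := Finset.card_pos.1 (by omega)
    have hni : n + A.max' hAn ∉ A := fun h => by
      have := A.le_max' _ h
      omega
    refine ⟨insert (n + A.max' hAn) A, by rw [Finset.card_insert_of_notMem hni, hA], x, ?_⟩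
    intro a ha
    rcases Finset.mem_insert.1 ha with rfl | ha
    · rw [Function.iterate_add_apply]
      exact (hx _ (A.max'_mem hAn)).2
    · exact (hx a ha).1

theorem nw_iter {X : Type*} [TopologicalSpace X] {f : X → X} (hf : Continuous f)
    (hnw : NonWandering f) {m : ℕ} (hm : 1 ≤ m) {U : Set X} (hU : IsOpen U) (hne : U.Nonempty) :
    ∃ y ∈ U, ∃ j, 1 ≤ j ∧ f^[m * j] y ∈ U := by
  obtain ⟨A, hA, x, hx⟩ := nw_many hf hnw m U hU hne
  obtain ⟨a, ha, b, hb, hab, hmod⟩ := Finset.exists_ne_map_eq_of_card_lt_of_maps_to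
    (s := A) (t := Finset.range m) (f := fun a => a % m) (by simp [hA])
    (fun a _ => by simpa using Nat.mod_lt _ (by omega))
  have key : ∀ a ∈ A, ∀ b ∈ A, a < b → a % m = b % m → ∃ y ∈ U, ∃ j, 1 ≤ j ∧ f^[m * j] y ∈ U := by
    intro a ha b hb hlt hmod
    obtain ⟨j, hj⟩ := (Nat.modEq_iff_dvd' hlt.le).1 hmod
    refine ⟨f^[a] x, hx a ha, j, ?_, ?_⟩
    · rcases Nat.eq_zero_or_pos j with h | h
      · subst h; omega
      · exact h
    · rw [← Function.iterate_add_apply, ← hj, Nat.sub_add_cancel hlt.le]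
      exact hx b hb
  rcases lt_or_gt_of_ne hab with h | h
  · exact key a ha b hb h hmod
  · exact key b hb a ha h hmod.symm

theorem AnnSplit.inv {E P Q : Set Ann} {σ : ℝ} (h : AnnSplit E P Q σ) {F : Ann ≃ₜ Ann}
    (hF : F '' E = E) {d : Ann} (hd : d ∈ P) (hd' : F d ∈ P) : F '' P = P := by
  have hdE : d ∈ Eᶜ := h.un ▸ Or.inl hd
  have := F.image_connectedComponentIn hdE
  rw [h.comp hd, Set.image_compl_eq F.bijective, hF, h.comp hd'] at this
  exact this

theorem main_aux (f : Ann ≃ₜ Ann) (G : (ℝ × ℝ) ≃ₜ (ℝ × ℝ))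
    (hp : ∀ z : ℝ × ℝ, projA (G z) = f (projA z))
    (hnw : NonWandering (⇑f)) (hnp : ¬ HasPeriodicPoint (⇑f))
    {C₁ C₂ P₁ Q₁ P₂ Q₂ : Set Ann} (hC₁ : IsAnnularContinuum C₁) (hC₂ : IsAnnularContinuum C₂)
    (hC₁inv : f '' C₁ = C₁) (hC₂inv : f '' C₂ = C₂)
    (h₁ : AnnSplit C₁ P₁ Q₁ 1) (h₂ : AnnSplit C₂ P₂ Q₂ 1) {c : Ann} (hc₁ : c ∈ C₁) (hc₂ : c ∈ C₂)
    (hne : (P₁ ∩ Q₂).Nonempty) : False := by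
  have hcP : c ∉ P₁ := fun h => by
    have : c ∈ C₁ᶜ := h₁.un ▸ Or.inl h
    exact this hc₁
  have hcQ : c ∉ Q₂ := fun h => by
    have : c ∈ C₂ᶜ := h₂.un ▸ Or.inr h
    exact this hc₂
  have hS : IsPreconnected (P₁ ∩ Q₂)ᶜ := by
    rw [Set.compl_inter]
    exact IsPreconnected.union c hcP hcQ (h₁.complP hC₁.1.isClosed hC₁.2.1)
      (h₂.swap.complP hC₂.1.isClosed hC₂.2.1)
  obtain ⟨M₁, -, hM₁⟩ := h₁.ends
  obtain ⟨M₂, hM₂, -⟩ := h₂.ends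
  have hup : ∀ z : Ann, max M₁ M₂ < z.2 → z ∈ (P₁ ∩ Q₂)ᶜ := fun z hz hz' =>
    Set.disjoint_left.1 h₂.disj (hM₂ z (by linarith [le_max_right M₁ M₂])) hz'.2
  have hlo : ∀ z : Ann, max M₁ M₂ < -z.2 → z ∈ (P₁ ∩ Q₂)ᶜ := fun z hz hz' =>
    Set.disjoint_left.1 h₁.disj hz'.1 (hM₁ z (by linarith [le_max_left M₁ M₂]))
  have hDo : IsOpen (P₁ ∩ Q₂) := h₁.oP.inter h₂.oQ
  set D₀ := P₁ ∩ Q₂ with hD₀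
  obtain ⟨a0, ha0⟩ := hne
  obtain ⟨x0, rfl⟩ := projA_open_quot.surjective a0
  set D := connectedComponentIn (projA ⁻¹' D₀) x0 with hD
  have hx0 : x0 ∈ D := mem_connectedComponentIn ha0
  have hDopen : IsOpen D := (hDo.preimage projA_cont).connectedComponentIn
  have hDsub : D ⊆ projA ⁻¹' D₀ := connectedComponentIn_subset _ _
  have hiness : ∀ (d : ℝ × ℝ) (k : ℤ), d ∈ D → d + ((k : ℝ), 0) ∈ D → k = 0 := fun d k h h' =>
    bl_inessential hDopen isPreconnected_connectedComponentIn hS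
      (fun d hd hd' => hd' (hDsub hd)) hup hlo h h'
  obtain ⟨q, hq, _, ⟨_, ⟨d, hd, rfl⟩, rfl⟩, ⟨d', hd', hdd'⟩⟩ :=
    hnw (projA '' D) (projA_open_quot.isOpenMap _ hDopen) ⟨_, x0, hx0, rfl⟩
  obtain ⟨F, hF⟩ := iter_homeo f q
  obtain ⟨Gq, hGq⟩ := iter_homeo G q
  have hGf : ∀ n z, projA (G^[n] z) = f^[n] (projA z) := by
    intro n
    induction n with
    | zero => intro z; rfl
    | succ n ih => intro z; rw [Function.iterate_succ_apply, ih, hp, Function.iterate_succ_apply]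
  have hFinv : ∀ C : Set Ann, f '' C = C → F '' C = C := by
    intro C hC
    have : ∀ n, f^[n] '' C = C := by
      intro n
      induction n with
      | zero => simp
      | succ n ih => rw [Function.iterate_succ, Set.image_comp, hC, ih]
    rw [← this q]
    rw [show (⇑F) = f^[q] from funext hF, this q, this q]
  have hFd : F (projA d) = projA d' := by rw [hF, hdd']
  have hFP : F '' P₁ = P₁ := h₁.inv (hFinv _ hC₁inv) (hDsub hd).1 (hFd ▸ (hDsub hd').1)
  have hFQ : F '' Q₂ = Q₂ := h₂.swap.inv (hFinv _ hC₂inv) (hDsub hd).2 (hFd ▸ (hDsub hd').2)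
  have hFD : F '' D₀ = D₀ := by rw [hD₀, Set.image_inter F.injective, hFP, hFQ]
  obtain ⟨k, hk⟩ : ∃ k : ℤ, Gq d = d' + ((k : ℝ), 0) := by
    apply projA_eq
    rw [hGq, hGf, ← hF, hFd]
  let H : (ℝ × ℝ) ≃ₜ (ℝ × ℝ) := Gq.trans (Homeomorph.addRight (((-k : ℤ) : ℝ), 0))
  have hH : ∀ z, projA (H z) = F (projA z) := by
    intro z
    change projA (Gq z + (((-k : ℤ) : ℝ), 0)) = _
    rw [projA_add_int, hGq, hGf, hF]
  have hHd : H d = d' := by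
    change Gq d + (((-k : ℤ) : ℝ), 0) = _
    rw [hk]
    ext <;> simp
  have hHpre : H '' (projA ⁻¹' D₀) = projA ⁻¹' D₀ := by
    ext z
    obtain ⟨w, rfl⟩ := H.surjective z
    rw [H.injective.mem_set_image, Set.mem_preimage, Set.mem_preimage, hH]
    conv_rhs => rw [← hFD]
    rw [F.injective.mem_set_image]
  have hHD : H '' D = D := by
    have := H.image_connectedComponentIn (hDsub hd)
    rw [hHpre, hHd, ← connectedComponentIn_eq hd, ← connectedComponentIn_eq hd'] at this
    exact this
  have hHmem : ∀ z ∈ D, H z ∈ D := fun z hz => hHD ▸ Set.mem_image_of_mem H hz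
  let e : (ℝ × ℝ) ≃ₜ ℂ := Complex.equivRealProdCLM.toHomeomorph.symm
  let h : ℂ ≃ₜ ℂ := e.symm.trans (H.trans e)
  have hh : ∀ z, h (e z) = e (H z) := fun z => by simp [h]
  let K : ℂ ≃ₜ ℂ := h.trans h
  have hK : ∀ z, K (e z) = e (H (H z)) := fun z => by
    change h (h (e z)) = _
    rw [hh, hh]
  have hFq : ∀ z, F (F z) = f^[2 * q] z := fun z => by
    rw [hF, hF, ← Function.iterate_add_apply]; congr 2; omega
  have hKn : ∀ n z, ∃ w, K^[n] (e z) = e w ∧ projA w = f^[(2 * q) * n] (projA z) ∧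
      (z ∈ D → w ∈ D) := by
    intro n
    induction n with
    | zero => intro z; exact ⟨z, rfl, rfl, id⟩
    | succ n ih =>
      intro z
      obtain ⟨w, hw1, hw2, hw3⟩ := ih (H (H z))
      refine ⟨w, by rw [Function.iterate_succ_apply, hK, hw1], ?_, fun hz =>
        hw3 (hHmem _ (hHmem _ hz))⟩
      rw [hw2, hH, hH, hFq, ← Function.iterate_add_apply]
      congr 1
  have hKfree : ∀ z, K z ≠ z := by
    intro z hz
    obtain ⟨w, rfl⟩ := e.surjective z
    rw [hK] at hz
    have hz' := congrArg projA (e.injective hz)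
    rw [hH, hH, hFq] at hz'
    exact hnp ⟨_, 2 * q, by omega, hz'⟩
  obtain ⟨U, V, hU, hV, hxU, hxV, hUV⟩ := t2_separation (hKfree (e x0)).symm
  have hWo : IsOpen (U ∩ K ⁻¹' V ∩ e.symm ⁻¹' D) :=
    (hU.inter (hV.preimage K.continuous)).inter (hDopen.preimage e.symm.continuous)
  obtain ⟨ε, hε, hball⟩ := Metric.isOpen_iff.1 hWo (e x0) ⟨⟨hxU, hxV⟩, by simpa using hx0⟩
  set N := Metric.ball (e x0) ε with hN
  have hNfree : ∀ z ∈ N, K z ∉ N := fun z hz hz' =>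
    Set.disjoint_left.1 hUV (hball hz').1.1 (hball hz).1.2
  have hNo : IsOpen N := Metric.isOpen_ball
  have hNc : IsPreconnected N := (convex_ball (e x0) ε).isPreconnected
  obtain ⟨y, ⟨b, hb, rfl⟩, j, hj, ⟨b', hb', hbb⟩⟩ := nw_iter f.continuous hnw (m := 2 * q) (by omega)
    (U := projA '' (e ⁻¹' N)) (projA_open_quot.isOpenMap _ (hNo.preimage e.continuous))
    ⟨_, x0, Metric.mem_ball_self hε, rfl⟩
  have hND : ∀ z, e z ∈ N → z ∈ D := fun z hz => by simpa using (hball hz).2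
  obtain ⟨w, hw1, hw2, hw3⟩ := hKn j b
  rw [← hbb] at hw2
  obtain ⟨k', hk'⟩ := projA_eq hw2
  have hw := hw3 (hND b hb)
  rw [hk'] at hw
  have hk0 := hiness b' k' (hND b' hb') hw
  subst hk0
  have : w = b' := by rw [hk']; ext <;> simp
  subst this
  exact bl_brouwer (bl_OPr_sq h) hKfree hNo hNc hNfree hb hj (hw1 ▸ hb')

/-- **Proposition 3.7.**  Two invariant circloids of a non-wandering annular
homeomorphism homotopic to the identity and without periodic points are equal or
disjoint. -/
theorem statement15 (f : Ann ≃ₜ Ann) (G : (ℝ × ℝ) ≃ₜ (ℝ × ℝ)) (hG : IsLiftA f G)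
    (hnw : NonWandering (⇑f)) (hnp : ¬ HasPeriodicPoint (⇑f))
    (C₁ C₂ : Set Ann) (hC₁ : IsCircloidA C₁) (hC₂ : IsCircloidA C₂)
    (hC₁inv : f '' C₁ = C₁) (hC₂inv : f '' C₂ = C₂) :
    C₁ = C₂ ∨ C₁ ∩ C₂ = ∅ := by
  by_contra hcon
  rw [not_or] at hcon
  obtain ⟨hne, hint⟩ := hcon
  obtain ⟨c, hc₁, hc₂⟩ := Set.nonempty_iff_ne_empty.2 hint
  obtain ⟨P₁, Q₁, h₁⟩ := split_of_annular hC₁.1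
  obtain ⟨P₂, Q₂, h₂⟩ := split_of_annular hC₂.1
  apply hne
  refine circloid_eq hC₁ hC₂ h₁ h₂ ?_ ?_
  · by_contra h
    exact main_aux f G hG.1 hnw hnp hC₁.1 hC₂.1 hC₁inv hC₂inv h₁ h₂ hc₁ hc₂
      (Set.nonempty_iff_ne_empty.2 h)
  · by_contra h
    exact main_aux f G hG.1 hnw hnp hC₂.1 hC₁.1 hC₂inv hC₁inv h₂ h₁ hc₂ hc₁
      (Set.nonempty_iff_ne_empty.2 h)
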